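/- Let p ≥ 3 and q = 2, and set n = p + q. The action of O(p,q) on the flag manifold F_{1,n-2} = {(V₁, V₂) : V₁ ⊆ V₂ ⊆ ℝⁿ, dim V₁ = 1, dim V₂ = n−2} has exactly 15 orbits. (By the correspondence established in the paper, this is the number of left-invariant pseudo-Riemannian metrics of signature (p,2) on H₃ × ℝ^{n−3} up to scaling and automorphisms.) -/

import Mathlib

open Module

noncomputable section

/-- The radical of a subspace `W` with respect to a bilinear form `B`:
the set of vectors of `W` orthogonal to every vector of `W`. -/
def rad {V : Type*} [AddCommGroup V] [Module ℝ V] (B : LinearMap.BilinForm ℝ V)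
    (W : Submodule ℝ V) : Submodule ℝ V :=
  W ⊓ LinearMap.BilinForm.orthogonal B W

/-- The maximal dimension of a subspace of `W` on which `B` is positive definite. -/
def posIdx {V : Type*} [AddCommGroup V] [Module ℝ V] (B : LinearMap.BilinForm ℝ V)
    (W : Submodule ℝ V) : ℕ :=
  sSup {k | ∃ P : Submodule ℝ V, P ≤ W ∧ finrank ℝ P = k ∧ ∀ x ∈ P, x ≠ 0 → 0 < B x x}

/-- The maximal dimension of a subspace of `W` on which `B` is negative definite. -/
def negIdx {V : Type*} [AddCommGroup V] [Module ℝ V] (B : LinearMap.BilinForm ℝ V)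
    (W : Submodule ℝ V) : ℕ :=
  sSup {k | ∃ P : Submodule ℝ V, P ≤ W ∧ finrank ℝ P = k ∧ ∀ x ∈ P, x ≠ 0 → B x x < 0}

/-- The signature `(s, t, u)` of a subspace `W` with respect to a bilinear form `B`. -/
def signat {V : Type*} [AddCommGroup V] [Module ℝ V] (B : LinearMap.BilinForm ℝ V)
    (W : Submodule ℝ V) : ℕ × ℕ × ℕ :=
  (posIdx B W, negIdx B W, finrank ℝ (rad B W))

/-- The standard inner product of signature `(p, q)` on `ℝ^(p+q)`,
given by the diagonal matrix `I_{p,q}`. -/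
def stdForm (p q : ℕ) : LinearMap.BilinForm ℝ (Fin (p + q) → ℝ) :=
  Matrix.toLinearMap₂' ℝ (Matrix.diagonal fun i => if (i : ℕ) < p then (1 : ℝ) else -1)

/-- The flag manifold `F_{1, p+q-2}`: pairs `(V₁, V₂)` of subspaces of `ℝ^(p+q)` with
`V₁ ⊆ V₂`, `dim V₁ = 1` and `dim V₂ = p+q-2`. -/
def FlagPQ (p q : ℕ) : Type :=
  {VW : Submodule ℝ (Fin (p + q) → ℝ) × Submodule ℝ (Fin (p + q) → ℝ) //
    VW.1 ≤ VW.2 ∧ finrank ℝ VW.1 = 1 ∧ finrank ℝ VW.2 = p + q - 2}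

/-- Two flags lie in the same `O(p,q)`-orbit: there is a linear automorphism of `ℝ^(p+q)`
preserving the standard form of signature `(p,q)` carrying one flag to the other. -/
def orbitRel (p q : ℕ) (F G : FlagPQ p q) : Prop :=
  ∃ g : (Fin (p + q) → ℝ) ≃ₗ[ℝ] (Fin (p + q) → ℝ),
    (∀ x y, stdForm p q (g x) (g y) = stdForm p q x y) ∧
      F.1.1 = (G.1.1).map g.toLinearMap ∧ F.1.2 = (G.1.2).map g.toLinearMap

/-!
Replace `V₂` by the plane `U = V₂^⊥`, which is orthogonal to the line `V₁`. If `V₁ ⊄ U`, then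
`V₁ ⊕ U` has an orthogonal frame `(l, u, v)` with `l` spanning `V₁` and `u, v` spanning `U`; if
`V₁ ⊆ U`, then `l` is isotropic and `U` has an orthogonal frame `(l, v)`. Over `ℝ` the frame can be
rescaled so that the form takes the values `1`, `-1`, `0` on it. By Witt's extension theorem flags
with the same signs lie in one orbit, and by Sylvester's law of inertia, applied to `V₁` and to
`U`, the signs are determined by the flag up to exchanging `u` and `v`. A frame with signs `σ`
exists in `ℝ^{p,q}` exactly when `#{σ ≥ 0} ≤ p` and `#{σ ≤ 0} ≤ q`, so only a finite enumeration is
left; for `p ≥ 3` and `q = 2` it gives `12 + 3` possibilities.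

Witt's theorem is reduced to its anisotropic case, where reflections suffice, by completing every
isotropic frame vector to a hyperbolic pair.
-/

section Witt

variable {K V ι : Type*} [Field K] [AddCommGroup V] [Module K V] {B : LinearMap.BilinForm K V}

/-- An orthogonal frame for the form `B` with prescribed values `B (u i) (u i) = a i`. Some of the
`a i` may vanish, which is why linear independence has to be imposed. -/
structure IsOrthogonalFrame (B : LinearMap.BilinForm K V) (a : ι → K) (u : ι → V) : Prop where
  linearIndependent : LinearIndependent K u
  pairwise : Pairwise fun i j ↦ B (u i) (u j) = 0
  apply_self : ∀ i, B (u i) (u i) = a i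

namespace IsOrthogonalFrame

variable {κ : Type*} {a : ι → K} {u : ι → V}

theorem of_ne_zero (hu : Pairwise fun i j ↦ B (u i) (u j) = 0)
    (hself : ∀ i, B (u i) (u i) = a i) (ha : ∀ i, a i ≠ 0) : IsOrthogonalFrame B a u where
  linearIndependent :=
    LinearMap.BilinForm.linearIndependent_of_iIsOrtho hu fun i ↦ (hself i).trans_ne (ha i)
  pairwise := hu
  apply_self := hself

theorem comp (h : IsOrthogonalFrame B a u) {f : κ → ι} (hf : Function.Injective f) :
    IsOrthogonalFrame B (a ∘ f) (u ∘ f) where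
  linearIndependent := h.linearIndependent.comp f hf
  pairwise _ _ hij := h.pairwise (hf.ne hij)
  apply_self i := h.apply_self (f i)

theorem neg (h : IsOrthogonalFrame B a u) : IsOrthogonalFrame (-B) (-a) u where
  linearIndependent := h.linearIndependent
  pairwise _ _ hij := neg_eq_zero.2 (h.pairwise hij)
  apply_self i := congrArg Neg.neg (h.apply_self i)

theorem map (h : IsOrthogonalFrame B a u) (g : B.IsometryEquiv B) :
    IsOrthogonalFrame B a (g ∘ u) where
  linearIndependent := h.linearIndependent.map' g.toLinearEquiv.toLinearMap g.toLinearEquiv.ker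
  pairwise _ _ hij := (g.map_app _ _).trans (h.pairwise hij)
  apply_self i := (g.map_app _ _).trans (h.apply_self i)

end IsOrthogonalFrame

theorem span_le_orthogonal_span_iff {s t : Set V} :
    Submodule.span K s ≤ B.orthogonal (Submodule.span K t) ↔ ∀ x ∈ s, ∀ y ∈ t, B y x = 0 := by
  rw [Submodule.span_le]
  refine forall₂_congr fun x _ ↦ ?_
  exact Submodule.span_le (p := (B.flip x).ker)

theorem orthogonal_map_isometryEquiv (g : B.IsometryEquiv B) (N : Submodule K V) :
    B.orthogonal (N.map g.toLinearEquiv.toLinearMap) =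
      (B.orthogonal N).map g.toLinearEquiv.toLinearMap := by
  ext x
  obtain ⟨y, rfl⟩ := g.toLinearEquiv.surjective x
  simp only [LinearMap.BilinForm.mem_orthogonal_iff, Submodule.mem_map, LinearEquiv.coe_coe,
    forall_exists_index, and_imp, forall_apply_eq_imp_iff₂, EmbeddingLike.apply_eq_iff_eq,
    exists_eq_right]
  exact forall₂_congr fun n _ ↦ by rw [← g.map_app y n, g.coe_toLinearEquiv]

theorem IsOrthogonalFrame.sumElim {κ : Type*} {a : ι → K} {u : ι → V} {b : κ → K} {v : κ → V}
    (hu : IsOrthogonalFrame B a u) (hv : IsOrthogonalFrame B b v) (hB : B.IsSymm)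
    (hdisj : Disjoint (Submodule.span K (Set.range u)) (Submodule.span K (Set.range v)))
    (horth : Submodule.span K (Set.range u) ≤ B.orthogonal (Submodule.span K (Set.range v))) :
    IsOrthogonalFrame B (Sum.elim a b) (Sum.elim u v) where
  linearIndependent := hu.linearIndependent.sum_type hv.linearIndependent hdisj
  pairwise := by
    have hvu : ∀ i j, B (v j) (u i) = 0 := by
      simpa only [Set.forall_mem_range] using span_le_orthogonal_span_iff.1 horth
    rintro (i | i) (j | j) hij
    · exact hu.pairwise (by simpa using hij)
    · exact (hB.eq _ _).trans (hvu i j)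
    · exact hvu j i
    · exact hv.pairwise (by simpa using hij)
  apply_self := by
    rintro (i | i)
    exacts [hu.apply_self i, hv.apply_self i]

theorem exists_isometryEquiv_reflection (hB : B.IsSymm) {v : V} (hv : B v v ≠ 0) :
    ∃ g : B.IsometryEquiv B, ∀ x, g x = x - (2 * B v x / B v v) • v := by
  have hrefl : LinearMap.IsReflective B v := ⟨.of_ne_zero hv, fun _ ↦ (Ne.isUnit hv).dvd⟩
  refine ⟨⟨Module.reflection (hrefl.coroot_apply_self B),
    hrefl.isOrthogonal_reflection B ⟨hB.eq⟩⟩, fun x ↦ ?_⟩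
  have hcoroot : hrefl.coroot B x = 2 * B v x / B v v := by
    rw [eq_div_iff hv, mul_comm, hrefl.apply_self_mul_coroot_apply]
  rw [← hcoroot]
  exact Module.reflection_apply x (hrefl.coroot_apply_self B)

theorem exists_isometryEquiv_apply_eq_of_sub (hB : B.IsSymm) {x y : V} (hxy : B x x = B y y)
    (hsub : B (x - y) (x - y) ≠ 0) :
    ∃ g : B.IsometryEquiv B, g x = y ∧ ∀ w, B w x = 0 → B w y = 0 → g w = w := by
  obtain ⟨g, hg⟩ := exists_isometryEquiv_reflection hB hsub
  refine ⟨g, ?_, fun w hwx hwy ↦ ?_⟩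
  · have hnum : 2 * B (x - y) x = B (x - y) (x - y) := by
      simp only [map_sub, LinearMap.sub_apply, hB.eq x y, hxy]
      ring
    rw [hg, hnum, div_self hsub, one_smul, sub_sub_cancel]
  · rw [hg, hB.eq, map_sub, hwx, hwy]
    simp

theorem exists_forall_bilin_eq_of_linearIndependent [FiniteDimensional K V] {u : ι → V}
    (hu : LinearIndependent K u) (hB : B.IsSymm) (hB' : B.Nondegenerate) (f : ι → K) :
    ∃ t, ∀ i, B (u i) t = f i := by
  obtain ⟨φ, hφ⟩ := ((Basis.span hu).constr K f).exists_extend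
  refine ⟨(B.toDual hB').symm φ, fun i ↦ ?_⟩
  have hφi : φ (Basis.span hu i) = f i :=
    (LinearMap.congr_fun hφ _).trans (Basis.constr_basis ..)
  rw [hB.eq, LinearMap.BilinForm.apply_toDual_symm_apply, ← hφi, Basis.span_apply]

/-- The values of the orthogonal frame obtained from one with values `a` by completing each
isotropic vector `e` to a hyperbolic pair `e, f` and replacing it by `e + f` and `e - f`. -/
def hyperbolicValues (a : ι → K) : {i // a i ≠ 0} ⊕ ({i // a i = 0} ⊕ {i // a i = 0}) → K :=
  Sum.elim (fun i ↦ a i) (Sum.elim (fun _ ↦ 2) fun _ ↦ -2)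

variable [NeZero (2 : K)]

theorem hyperbolicValues_ne_zero (a : ι → K) : ∀ i, hyperbolicValues a i ≠ 0 := by
  rintro (i | _ | _)
  exacts [i.2, two_ne_zero, neg_ne_zero.2 two_ne_zero]

/-- One of `x - y` and `x + y` is anisotropic; in the second case follow the reflection in `x + y`
by the one in `y`. -/
theorem exists_isometryEquiv_apply_eq (hB : B.IsSymm) {x y : V} (hxy : B x x = B y y)
    (hy : B y y ≠ 0) :
    ∃ g : B.IsometryEquiv B, g x = y ∧ ∀ w, B w x = 0 → B w y = 0 → g w = w := by
  by_cases hsub : B (x - y) (x - y) = 0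
  · have hadd : B (x - -y) (x - -y) ≠ 0 := by
      have hpar : B (x - -y) (x - -y) + B (x - y) (x - y) = 2 * (2 * B y y) := by
        simp only [map_sub, map_neg, LinearMap.sub_apply, LinearMap.neg_apply, hxy]
        ring
      rw [hsub, add_zero] at hpar
      exact hpar ▸ mul_ne_zero two_ne_zero (mul_ne_zero two_ne_zero hy)
    have hneg : B (-y - y) (-y - y) ≠ 0 := by
      have hfour : B (-y - y) (-y - y) = 2 * (2 * B y y) := by
        simp only [map_sub, map_neg, LinearMap.sub_apply, LinearMap.neg_apply]
        ring
      exact hfour ▸ mul_ne_zero two_ne_zero (mul_ne_zero two_ne_zero hy)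
    obtain ⟨g, hgx, hg⟩ := exists_isometryEquiv_apply_eq_of_sub hB (by simpa using hxy) hadd
    obtain ⟨h, hhy, hh⟩ := exists_isometryEquiv_apply_eq_of_sub hB (by simp) hneg
    refine ⟨g.trans h, (congrArg h hgx).trans hhy, fun w hwx hwy ↦ ?_⟩
    have hwy' : B w (-y) = 0 := by rw [map_neg, hwy, neg_zero]
    exact (congrArg h (hg w hwx hwy')).trans (hh w hwy' hwy)
  · exact exists_isometryEquiv_apply_eq_of_sub hB hxy hsub

namespace IsOrthogonalFrame

variable {a : ι → K} {u u' : ι → V}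

theorem exists_isometryEquiv_of_ne_zero [Finite ι] (h : IsOrthogonalFrame B a u)
    (h' : IsOrthogonalFrame B a u') (hB : B.IsSymm) (ha : ∀ i, a i ≠ 0) :
    ∃ g : B.IsometryEquiv B, ∀ i, g (u i) = u' i := by
  classical
  have := Fintype.ofFinite ι
  suffices ∀ s : Finset ι, ∃ g : B.IsometryEquiv B, ∀ i ∈ s, g (u i) = u' i by
    simpa using this Finset.univ
  intro s
  induction s using Finset.induction with
  | empty => exact ⟨.refl B, by simp⟩
  | insert i s his ih =>
    obtain ⟨g, hg⟩ := ih
    have hself : B (g (u i)) (g (u i)) = B (u' i) (u' i) := by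
      rw [g.map_app, h.apply_self, h'.apply_self]
    obtain ⟨r, hri, hr⟩ :=
      exists_isometryEquiv_apply_eq hB hself ((h'.apply_self i).trans_ne (ha i))
    refine ⟨g.trans r, fun j hj ↦ ?_⟩
    obtain rfl | hjs := Finset.mem_insert.1 hj
    · exact hri
    · have hji : j ≠ i := ne_of_mem_of_not_mem hjs his
      have hfix : r (u' j) = u' j :=
        hr _ (by rw [← hg j hjs, g.map_app, h.pairwise hji]) (h'.pairwise hji)
      exact (congrArg r (hg j hjs)).trans hfix

variable [FiniteDimensional K V]

open scoped Classical in
/-- Starting from any dual family `t`, the correction `t j - ½ ∑ k, B (t j) (t k) • u k` is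
isotropic. -/
theorem exists_isotropic_dual [Finite ι] (h : IsOrthogonalFrame B a u) (hB : B.IsSymm)
    (hB' : B.Nondegenerate) :
    ∃ s : {i // a i = 0} → V, (∀ j k, B (s j) (s k) = 0) ∧
      ∀ i j, B (u i) (s j) = if i = j then 1 else 0 := by
  have := Fintype.ofFinite ι
  choose t ht using fun j : {i // a i = 0} ↦
    exists_forall_bilin_eq_of_linearIndependent h.linearIndependent hB hB' (Pi.single j.1 1)
  have hu : ∀ i (k : {i // a i = 0}), B (u i) (u k) = 0 := fun i k ↦ by
    obtain rfl | hik := eq_or_ne i k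
    · rw [h.apply_self, k.2]
    · exact h.pairwise hik
  let s : {i // a i = 0} → V := fun j ↦ t j - (2 : K)⁻¹ • ∑ k, B (t j) (t k) • u k
  have hus : ∀ i j, B (u i) (s j) = if i = j then 1 else 0 := fun i j ↦ by
    simp [s, ht, hu, Pi.single_apply]
  have hts : ∀ j k, B (t j) (s k) = 2⁻¹ * B (t j) (t k) := fun j k ↦ by
    have htu : ∀ l : {i // a i = 0}, B (t j) (u l) = if l = j then 1 else 0 := fun l ↦ by
      simp [hB.eq (t j), ht, Pi.single_apply, Subtype.ext_iff]
    simp only [s, map_sub, map_smul, map_sum, smul_eq_mul, htu, mul_ite, mul_one, mul_zero,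
      Finset.sum_ite_eq', Finset.mem_univ, if_true, hB.eq (t k)]
    linear_combination -(B (t j) (t k)) * inv_mul_cancel₀ (two_ne_zero (α := K))
  refine ⟨s, fun j k ↦ ?_, hus⟩
  calc B (s j) (s k) = B (t j) (s k) - 2⁻¹ * ∑ l, B (t j) (t l) * B (u l) (s k) := by
        simp [s]
    _ = 0 := by simp [hus, hts, Subtype.val_inj]

theorem exists_hyperbolic_completion [Finite ι] (h : IsOrthogonalFrame B a u) (hB : B.IsSymm)
    (hB' : B.Nondegenerate) :
    ∃ v : {i // a i ≠ 0} ⊕ ({i // a i = 0} ⊕ {i // a i = 0}) → V,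
      IsOrthogonalFrame B (hyperbolicValues a) v ∧ (∀ i, v (.inl i) = u i) ∧
      ∀ i, v (.inr (.inl i)) + v (.inr (.inr i)) = (2 : K) • u i := by
  classical
  obtain ⟨s, hss, hus⟩ := h.exists_isotropic_dual hB hB'
  have hsu : ∀ i j, B (s j) (u i) = if i = j then 1 else 0 := fun i j ↦ by rw [hB.eq, hus]
  have huu : ∀ i j, B (u i) (u j) = if i = j then a i else 0 := fun i j ↦ by
    split_ifs with hij
    · rw [← hij, h.apply_self]
    · exact h.pairwise hij
  refine ⟨Sum.elim (fun i ↦ u i) (Sum.elim (fun i ↦ u i + s i) fun i ↦ u i - s i),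
    .of_ne_zero ?_ ?_ (hyperbolicValues_ne_zero a), fun i ↦ rfl, fun i ↦ ?_⟩
  · rintro (i | i | i) (j | j | j) hij <;>
      simp only [Sum.elim_inl, Sum.elim_inr, map_add, map_sub, LinearMap.add_apply,
        LinearMap.sub_apply, huu, hus, hsu, hss] <;> grind
  · rintro (i | i | i) <;> simp [huu, hus, hsu, hss, i.2, hyperbolicValues] <;> ring
  · simp only [Sum.elim_inr, Sum.elim_inl, two_smul]
    abel

/-- Both hyperbolic completions have non-zero values, so reflections carry one to the other. -/
theorem exists_isometryEquiv [Finite ι] (h : IsOrthogonalFrame B a u)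
    (h' : IsOrthogonalFrame B a u') (hB : B.IsSymm) (hB' : B.Nondegenerate) :
    ∃ g : B.IsometryEquiv B, ∀ i, g (u i) = u' i := by
  obtain ⟨v, hv, hvu, hvu₂⟩ := h.exists_hyperbolic_completion hB hB'
  obtain ⟨v', hv', hvu', hvu₂'⟩ := h'.exists_hyperbolic_completion hB hB'
  obtain ⟨g, hg⟩ := hv.exists_isometryEquiv_of_ne_zero hv' hB (hyperbolicValues_ne_zero a)
  refine ⟨g, fun i ↦ ?_⟩
  by_cases hi : a i = 0
  · refine smul_right_injective V (two_ne_zero (α := K)) ?_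
    change (2 : K) • g (u i) = (2 : K) • u' i
    rw [← map_smul, ← hvu₂ ⟨i, hi⟩, ← hvu₂' ⟨i, hi⟩, map_add, hg, hg]
  · rw [← hvu ⟨i, hi⟩, ← hvu' ⟨i, hi⟩, hg]

end IsOrthogonalFrame

end Witt

section SignType

variable {K ι κ : Type*} [Ring K] [LinearOrder K] [IsStrictOrderedRing K] {s : SignType}

theorem strictMono_signType_cast : StrictMono ((↑) : SignType → K) := by
  intro s t hst
  cases s <;> cases t <;> first | exact absurd hst (by decide) | norm_num

theorem signType_cast_pos_iff : 0 < (s : K) ↔ 0 < s := by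
  simpa using (strictMono_signType_cast (K := K)).lt_iff_lt (a := 0) (b := s)

theorem signType_cast_neg_iff : (s : K) < 0 ↔ s < 0 := by
  simpa using (strictMono_signType_cast (K := K)).lt_iff_lt (a := s) (b := 0)

theorem signType_cast_nonneg_iff : 0 ≤ (s : K) ↔ 0 ≤ s := by
  rw [← not_lt, signType_cast_neg_iff, not_lt]

theorem signType_cast_nonpos_iff : (s : K) ≤ 0 ↔ s ≤ 0 := by
  rw [← not_lt, signType_cast_pos_iff, not_lt]

theorem natCard_eq_add_of_signType [Finite ι] (σ : ι → SignType) :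
    Nat.card ι = Nat.card {i // σ i = 0} + Nat.card {i // σ i = -1} + Nat.card {i // σ i = 1} := by
  have hsum : Nat.card ι = ∑ c, Nat.card {i // σ i = c} := by
    rw [← Nat.card_congr (Equiv.sigmaFiberEquiv σ), Nat.card_sigma]
  rw [hsum, SignType.univ_eq]
  simp [add_assoc]

theorem exists_equiv_apply_eq_of_ncard_eq [Finite ι] [Finite κ] {σ : ι → SignType}
    {τ : κ → SignType} (hcard : Nat.card ι = Nat.card κ)
    (hpos : {i | 0 < σ i}.ncard = {j | 0 < τ j}.ncard)
    (hneg : {i | σ i < 0}.ncard = {j | τ j < 0}.ncard) : ∃ e : ι ≃ κ, ∀ i, τ (e i) = σ i := by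
  have hfiber : ∀ c, Nat.card {i // σ i = c} = Nat.card {j // τ j = c} := by
    simp only [SignType.neg_iff, SignType.pos_iff, ← Nat.card_coe_set_eq,
      Set.coe_ofPred] at hpos hneg
    rw [natCard_eq_add_of_signType σ, natCard_eq_add_of_signType τ, hneg, hpos,
      Nat.add_right_cancel_iff, Nat.add_right_cancel_iff] at hcard
    rintro (_ | _ | _)
    exacts [hcard, hneg, hpos]
  exact ⟨Equiv.ofFiberEquiv fun c ↦ (Finite.card_eq.1 (hfiber c)).some, Equiv.ofFiberEquiv_map _⟩

end SignType

section Signature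

variable {K V ι κ : Type*} [Field K] [AddCommGroup V] [Module K V] {B : LinearMap.BilinForm K V}
  {a : ι → K} {u : ι → V}

namespace IsOrthogonalFrame

theorem apply_sum_smul_self [Fintype ι] (h : IsOrthogonalFrame B a u) (c : ι → K) :
    B (∑ i, c i • u i) (∑ i, c i • u i) = ∑ i, a i • (c i * c i) := by
  simp only [map_sum, LinearMap.sum_apply, map_smul, LinearMap.smul_apply, smul_eq_mul]
  refine Finset.sum_congr rfl fun i _ ↦ ?_
  rw [Finset.sum_eq_single i (fun j _ hj ↦ by rw [h.pairwise hj]; simp) (by simp),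
    h.apply_self]
  ring

theorem equivalent_weightedSumSquares [Fintype ι] (h : IsOrthogonalFrame B a u) :
    (B.toQuadraticMap.restrict (Submodule.span K (Set.range u))).Equivalent
      (QuadraticMap.weightedSumSquares K a) := by
  have hrepr : (B.toQuadraticMap.restrict _).basisRepr (Basis.span h.linearIndependent) =
      QuadraticMap.weightedSumSquares K a := by
    ext c
    rw [QuadraticMap.basisRepr_apply, QuadraticMap.weightedSumSquares_apply,
      ← h.apply_sum_smul_self c]
    simp [Basis.span_apply]
  exact hrepr ▸ ⟨QuadraticMap.isometryEquivBasisRepr _ _⟩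

variable [LinearOrder K] [IsStrictOrderedRing K]

theorem sigPos_add_ncard_le [Finite ι] [FiniteDimensional K V] (h : IsOrthogonalFrame B a u) :
    sigPos B.toQuadraticMap + {i | a i ≤ 0}.ncard ≤ finrank K V := by
  have := Fintype.ofFinite ι
  have hsub := h.comp (Subtype.val_injective (p := (· ∈ {i | a i ≤ 0})))
  rw [← Nat.card_coe_set_eq, Nat.card_eq_fintype_card,
    ← finrank_span_eq_card hsub.linearIndependent]
  refine QuadraticForm.sigPos_add_finrank_le_of_nonpos fun x hx ↦ ?_
  obtain ⟨c, rfl⟩ := (Submodule.mem_span_range_iff_exists_fun K).1 hx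
  rw [LinearMap.BilinMap.toQuadraticMap_apply, hsub.apply_sum_smul_self]
  exact Finset.sum_nonpos fun i _ ↦ mul_nonpos_of_nonpos_of_nonneg i.2 (mul_self_nonneg _)

theorem sigNeg_add_ncard_le [Finite ι] [FiniteDimensional K V] (h : IsOrthogonalFrame B a u) :
    sigNeg B.toQuadraticMap + {i | 0 ≤ a i}.ncard ≤ finrank K V := by
  simpa using h.neg.sigPos_add_ncard_le

end IsOrthogonalFrame

variable [LinearOrder K] [IsStrictOrderedRing K]

/-- An orthogonal frame normalised so that `B (u i) (u i)` is `1`, `-1` or `0`. -/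
abbrev IsSignFrame (B : LinearMap.BilinForm K V) (σ : ι → SignType) (u : ι → V) : Prop :=
  IsOrthogonalFrame B (fun i ↦ (σ i : K)) u

theorem IsSignFrame.exists_equiv [Finite ι] [Finite κ] {σ : ι → SignType} {τ : κ → SignType}
    {v : κ → V} (hu : IsSignFrame B σ u) (hv : IsSignFrame B τ v)
    (hspan : Submodule.span K (Set.range u) = Submodule.span K (Set.range v)) :
    ∃ e : ι ≃ κ, ∀ i, τ (e i) = σ i := by
  have := Fintype.ofFinite ι
  have := Fintype.ofFinite κ
  have hv' := hv.equivalent_weightedSumSquares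
  rw [← hspan] at hv'
  refine exists_equiv_apply_eq_of_ncard_eq ?_ ?_ ?_
  · rw [Nat.card_eq_fintype_card, Nat.card_eq_fintype_card,
      ← finrank_span_eq_card hu.linearIndependent, hspan, finrank_span_eq_card hv.linearIndependent]
  · simpa only [signType_cast_pos_iff] using
      (QuadraticForm.sigPos_of_equiv_weightedSumSquares hu.equivalent_weightedSumSquares).symm.trans
        (QuadraticForm.sigPos_of_equiv_weightedSumSquares hv')
  · simpa only [signType_cast_neg_iff] using
      (QuadraticForm.sigNeg_of_equiv_weightedSumSquares hu.equivalent_weightedSumSquares).symm.trans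
        (QuadraticForm.sigNeg_of_equiv_weightedSumSquares hv')

end Signature

section Normalisation

variable {V : Type*} [AddCommGroup V] [Module ℝ V] {B : LinearMap.BilinForm ℝ V}

theorem exists_ne_zero_mul_self_mul_eq_sign (a : ℝ) :
    ∃ c : ℝ, c ≠ 0 ∧ c * c * a = SignType.sign a := by
  obtain rfl | ha := eq_or_ne a 0
  · exact ⟨1, by simp⟩
  · refine ⟨(√|a|)⁻¹, by simpa using ha, ?_⟩
    rw [← mul_inv, Real.mul_self_sqrt (abs_nonneg a), inv_mul_eq_iff_eq_mul₀ (by simpa using ha),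
      abs_mul_sign]

theorem exists_monotone_isSignFrame (hB : B.IsSymm) {n : ℕ} {U : Submodule ℝ V}
    [FiniteDimensional ℝ U] (hU : finrank ℝ U = n) :
    ∃ σ : Fin n → SignType, Monotone σ ∧
      ∃ u, IsSignFrame B σ u ∧ Submodule.span ℝ (Set.range u) = U := by
  subst hU
  obtain ⟨b, hb⟩ := LinearMap.BilinForm.exists_orthogonal_basis (B := B.restrict U)
    ⟨fun x y ↦ hB.eq x y⟩
  choose c hc hcb using fun i ↦ exists_ne_zero_mul_self_mul_eq_sign (B (b i) (b i))
  let σ : Fin (finrank ℝ U) → SignType := fun i ↦ SignType.sign (B (b i) (b i))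
  let b' := b.unitsSMul fun i ↦ Units.mk0 (c i) (hc i)
  have hb' : ∀ i, (b' i : V) = c i • (b i : V) := fun i ↦ by simp [b', Basis.unitsSMul_apply]
  have hframe : IsSignFrame B σ fun i ↦ (b' i : V) :=
    { linearIndependent := b'.linearIndependent.map' U.subtype U.ker_subtype
      pairwise i j hij := by
        have hbij : B (b i) (b j) = 0 := hb hij
        simp [hb', hbij]
      apply_self i := by simp [hb', σ, ← hcb i, mul_assoc] }
  refine ⟨σ ∘ Tuple.sort σ, Tuple.monotone_sort σ, _, hframe.comp (Tuple.sort σ).injective, ?_⟩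
  rw [(Tuple.sort σ).surjective.range_comp, Set.range_comp' Subtype.val b', ← U.coe_subtype,
    Submodule.span_image, b'.span_eq, Submodule.map_subtype_top]

theorem exists_isSignFrame_sum (hB : B.IsSymm) {m n : ℕ} {L W : Submodule ℝ V}
    [FiniteDimensional ℝ L] [FiniteDimensional ℝ W] (hL : finrank ℝ L = m) (hW : finrank ℝ W = n)
    (hdisj : Disjoint L W) (horth : L ≤ B.orthogonal W) :
    ∃ σ : Fin m ⊕ Fin n → SignType, Monotone (σ ∘ Sum.inr) ∧
      ∃ u, IsSignFrame B σ u ∧ Submodule.span ℝ (Set.range (u ∘ Sum.inl)) = L ∧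
        Submodule.span ℝ (Set.range (u ∘ Sum.inr)) = W := by
  obtain ⟨σ, -, u, hu, rfl⟩ := exists_monotone_isSignFrame hB hL
  obtain ⟨τ, hτ, v, hv, rfl⟩ := exists_monotone_isSignFrame hB hW
  have hvalues : (fun i ↦ ((Sum.elim σ τ i : SignType) : ℝ)) =
      Sum.elim (fun i ↦ (σ i : ℝ)) fun j ↦ (τ j : ℝ) := by
    ext (i | j) <;> rfl
  refine ⟨Sum.elim σ τ, hτ, Sum.elim u v, ?_, rfl, rfl⟩
  rw [IsSignFrame, hvalues]
  exact hu.sumElim hv hB hdisj horth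

end Normalisation

section StandardForm

variable {p q : ℕ}

theorem stdForm_apply (x y : Fin (p + q) → ℝ) :
    stdForm p q x y = ∑ i : Fin (p + q), (if (i : ℕ) < p then 1 else -1) * (x i * y i) := by
  simp only [stdForm, Matrix.toLinearMap₂'_apply', Matrix.mulVec_diagonal, dotProduct]
  exact Finset.sum_congr rfl fun i _ ↦ by ring

theorem dotProduct_append (x x' : Fin p → ℝ) (y y' : Fin q → ℝ) :
    Fin.append x y ⬝ᵥ Fin.append x' y' = x ⬝ᵥ x' + y ⬝ᵥ y' := by
  simp [dotProduct, Fin.sum_univ_add]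

theorem stdForm_append (x x' : Fin p → ℝ) (y y' : Fin q → ℝ) :
    stdForm p q (Fin.append x y) (Fin.append x' y') = x ⬝ᵥ x' - y ⬝ᵥ y' := by
  simp [stdForm_apply, Fin.sum_univ_add, dotProduct, sub_eq_add_neg]

theorem isSymm_stdForm : (stdForm p q).IsSymm :=
  ⟨fun x y ↦ by simp only [stdForm_apply, mul_comm (x _)]⟩

theorem nondegenerate_stdForm : (stdForm p q).Nondegenerate := by
  refine LinearMap.BilinForm.nondegenerate_toBilin'_of_det_ne_zero' _ ?_
  rw [Matrix.det_diagonal]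
  exact Finset.prod_ne_zero_iff.2 fun i _ ↦ by split_ifs <;> norm_num

theorem toQuadraticMap_stdForm :
    (stdForm p q).toQuadraticMap =
      QuadraticMap.weightedSumSquares ℝ
        fun i : Fin (p + q) ↦ if (i : ℕ) < p then (1 : ℝ) else -1 := by
  ext x
  simp [stdForm_apply]

theorem sigPos_stdForm : sigPos (stdForm p q).toQuadraticMap = p := by
  rw [toQuadraticMap_stdForm, QuadraticForm.sigPos_weightedSumSquares]
  have hrange : {i : Fin (p + q) | (0 : ℝ) < if (i : ℕ) < p then 1 else -1} =
      Set.range (Fin.castAdd q) := by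
    ext i
    refine Fin.addCases (fun j ↦ ?_) (fun j ↦ ?_) i
    · simp
    · have hne : ∀ y : Fin p, (y : ℕ) ≠ p + j := fun y ↦ by lia
      simp [Fin.ext_iff, (zero_le_one (α := ℝ)).not_gt, hne]
  rw [hrange, Set.ncard_range_of_injective (Fin.castAdd_injective p q), Nat.card_fin]

theorem sigNeg_stdForm : sigNeg (stdForm p q).toQuadraticMap = q := by
  rw [toQuadraticMap_stdForm, QuadraticForm.sigNeg_weightedSumSquares]
  have hrange : {i : Fin (p + q) | (if (i : ℕ) < p then 1 else -1) < (0 : ℝ)} =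
      Set.range (Fin.natAdd p) := by
    ext i
    refine Fin.addCases (fun j ↦ ?_) (fun j ↦ ?_) i
    · have hne : ∀ y : Fin q, p + (y : ℕ) ≠ j := fun y ↦ by lia
      simp [Fin.ext_iff, (zero_le_one (α := ℝ)).not_gt, hne]
    · simp
  rw [hrange, Set.ncard_range_of_injective (Fin.natAdd_injective q p), Nat.card_fin]

/-- The counting condition under which `σ` is the family of signs of a frame in `ℝ^{p,q}`: every
isotropic frame vector uses up both a positive and a negative direction. -/
def IsRealizable {ι : Type*} [Fintype ι] (p q : ℕ) (σ : ι → SignType) : Prop :=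
  Fintype.card {i // 0 ≤ σ i} ≤ p ∧ Fintype.card {i // σ i ≤ 0} ≤ q

variable {ι : Type*} [Fintype ι] {σ : ι → SignType}

instance : Decidable (IsRealizable p q σ) :=
  inferInstanceAs (Decidable (_ ∧ _))

theorem isRealizable_min_iff {n : ℕ} (hn : Fintype.card ι ≤ n) :
    IsRealizable (min p n) (min q n) σ ↔ IsRealizable p q σ := by
  have hpos : Fintype.card {i // 0 ≤ σ i} ≤ n := (Fintype.card_subtype_le _).trans hn
  have hneg : Fintype.card {i // σ i ≤ 0} ≤ n := (Fintype.card_subtype_le _).trans hn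
  simp only [IsRealizable, le_min_iff, hpos, hneg, and_true]

theorem IsSignFrame.isRealizable {u : ι → Fin (p + q) → ℝ} (h : IsSignFrame (stdForm p q) σ u) :
    IsRealizable p q σ := by
  have hpos := h.sigPos_add_ncard_le
  have hneg := h.sigNeg_add_ncard_le
  simp only [sigPos_stdForm, sigNeg_stdForm, finrank_fin_fun, signType_cast_nonneg_iff,
    signType_cast_nonpos_iff, ← Nat.card_coe_set_eq, Set.coe_ofPred,
    Nat.card_eq_fintype_card] at hpos hneg
  exact ⟨by lia, by lia⟩

theorem exists_dotProduct_eq_ite {n : ℕ} (P : ι → Prop) [DecidablePred P] [DecidableEq ι]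
    (hP : Fintype.card {i // P i} ≤ n) :
    ∃ x : ι → Fin n → ℝ, ∀ i j, x i ⬝ᵥ x j = if i = j ∧ P i then 1 else 0 := by
  obtain ⟨f⟩ := Function.Embedding.nonempty_of_card_le (hP.trans_eq (Fintype.card_fin n).symm)
  refine ⟨fun i ↦ if h : P i then Pi.single (f ⟨i, h⟩) 1 else 0, fun i j ↦ ?_⟩
  by_cases hi : P i
  · by_cases hj : P j
    · simp [hi, hj, Pi.single_apply, f.injective.eq_iff, eq_comm (a := j)]
    · have hij : i ≠ j := fun hij ↦ hj (hij ▸ hi)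
      simp [hj, hij]
  · simp [hi]

theorem IsRealizable.exists_isSignFrame (h : IsRealizable p q σ) :
    ∃ u, IsSignFrame (stdForm p q) σ u := by
  classical
  obtain ⟨x, hx⟩ := exists_dotProduct_eq_ite (fun i ↦ 0 ≤ σ i) h.1
  obtain ⟨y, hy⟩ := exists_dotProduct_eq_ite (fun i ↦ σ i ≤ 0) h.2
  refine ⟨fun i ↦ Fin.append (x i) (y i), ⟨?_, fun i j hij ↦ ?_, fun i ↦ ?_⟩⟩
  · refine LinearMap.BilinForm.linearIndependent_of_iIsOrtho (B := dotProductBilin ℝ ℝ)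
      (fun i j hij ↦ ?_) fun i ↦ ?_
    · simp [Function.onFun, dotProduct_append, hx, hy, hij]
    · have hself : Fin.append (x i) (y i) ⬝ᵥ Fin.append (x i) (y i) ≠ 0 := by
        rw [dotProduct_append, hx, hy]
        obtain hi | hi := le_total 0 (σ i) <;> simp only [hi, and_self, if_true] <;> positivity
      exact hself
  · simp [stdForm_append, hx, hy, hij]
  · rw [stdForm_append, hx, hy]
    cases σ i <;> simp [show ¬ (0 : SignType) ≤ -1 by decide, show ¬ (1 : SignType) ≤ 0 by decide]

end StandardForm
section Flags

variable {p q : ℕ} {ι κ : Type*} {F G : FlagPQ p q}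

theorem orthogonal_orthogonal_stdForm (W : Submodule ℝ (Fin (p + q) → ℝ)) :
    (stdForm p q).orthogonal ((stdForm p q).orthogonal W) = W :=
  LinearMap.BilinForm.orthogonal_orthogonal nondegenerate_stdForm isSymm_stdForm.isRefl W

theorem finrank_orthogonal_flag (F : FlagPQ p q) :
    finrank ℝ ((stdForm p q).orthogonal F.1.2) = 2 := by
  obtain ⟨hle, hline, hcodim⟩ := F.2
  have hpos : finrank ℝ F.1.1 ≤ finrank ℝ F.1.2 := Submodule.finrank_mono hle
  rw [LinearMap.BilinForm.finrank_orthogonal nondegenerate_stdForm, finrank_fin_fun]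
  lia

/-- The flag `F = (V₁, V₂)` is described by a frame `u` with signs `σ`: the line `V₁` is spanned by
`u i₀` and the plane orthogonal to `V₂` is spanned by the two vectors `u (e k)`. -/
def HasAdaptedFrame (F : FlagPQ p q) (σ : ι → SignType) (i₀ : ι) (e : κ ↪ ι) : Prop :=
  ∃ u, IsSignFrame (stdForm p q) σ u ∧ F.1.1 = Submodule.span ℝ {u i₀} ∧
    (stdForm p q).orthogonal F.1.2 = Submodule.span ℝ (Set.range (u ∘ e))

namespace HasAdaptedFrame

variable {σ : ι → SignType} {i₀ : ι} {e : κ ↪ ι}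

theorem of_orbitRel (hG : HasAdaptedFrame G σ i₀ e) (h : orbitRel p q F G) :
    HasAdaptedFrame F σ i₀ e := by
  obtain ⟨u, hu, hG₁, hG₂⟩ := hG
  obtain ⟨g, hg, hF₁, hF₂⟩ := h
  let g' : (stdForm p q).IsometryEquiv (stdForm p q) := ⟨g, hg⟩
  refine ⟨g ∘ u, hu.map g', ?_, ?_⟩
  · rw [hF₁, hG₁, Submodule.map_span, Set.image_singleton]
    rfl
  · rw [hF₂, orthogonal_map_isometryEquiv g', hG₂, Submodule.map_span, ← Set.range_comp]
    rfl

theorem orbitRel [Finite ι] (hF : HasAdaptedFrame F σ i₀ e) (hG : HasAdaptedFrame G σ i₀ e) :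
    orbitRel p q F G := by
  obtain ⟨u, hu, hF₁, hF₂⟩ := hF
  obtain ⟨v, hv, hG₁, hG₂⟩ := hG
  obtain ⟨g, hg⟩ := hv.exists_isometryEquiv hu isSymm_stdForm nondegenerate_stdForm
  obtain rfl : g ∘ v = u := funext hg
  refine ⟨g.toLinearEquiv, g.map_app', ?_, ?_⟩
  · rw [hF₁, hG₁, Submodule.map_span, Set.image_singleton]
    rfl
  · rw [← orthogonal_orthogonal_stdForm F.1.2, ← orthogonal_orthogonal_stdForm G.1.2, hF₂, hG₂,
      ← orthogonal_map_isometryEquiv, Submodule.map_span, ← Set.range_comp]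
    rfl

theorem isRealizable [Fintype ι] (h : HasAdaptedFrame F σ i₀ e) : IsRealizable p q σ :=
  let ⟨_, hu, _⟩ := h
  hu.isRealizable

theorem le_orthogonal_iff (h : HasAdaptedFrame F σ i₀ e) :
    F.1.1 ≤ (stdForm p q).orthogonal F.1.2 ↔ i₀ ∈ Set.range e := by
  obtain ⟨u, hu, hF₁, hF₂⟩ := h
  rw [hF₁, hF₂, Submodule.span_singleton_le_iff_mem, Set.range_comp]
  exact ⟨not_imp_not.1 hu.linearIndependent.notMem_span_image,
    fun hi₀ ↦ Submodule.subset_span (Set.mem_image_of_mem u hi₀)⟩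

section Uniqueness

variable {ι' κ' : Type*} {τ : ι' → SignType} {j₀ : ι'} {f : κ' ↪ ι'}

theorem sign_line_eq (h : HasAdaptedFrame F σ i₀ e) (h' : HasAdaptedFrame F τ j₀ f) :
    σ i₀ = τ j₀ := by
  obtain ⟨u, hu, hF₁, -⟩ := h
  obtain ⟨v, hv, hF₁', -⟩ := h'
  have hu' := hu.comp (Function.injective_of_subsingleton fun _ : Unit ↦ i₀)
  have hv' := hv.comp (Function.injective_of_subsingleton fun _ : Unit ↦ j₀)
  obtain ⟨_, hπ⟩ := IsSignFrame.exists_equiv (σ := fun _ ↦ σ i₀) (τ := fun _ ↦ τ j₀) hu' hv'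
    (by simpa only [Set.range_unique, Function.comp_apply] using hF₁.symm.trans hF₁')
  exact (hπ ()).symm

theorem exists_equiv [Finite κ] [Finite κ'] (h : HasAdaptedFrame F σ i₀ e)
    (h' : HasAdaptedFrame F τ j₀ f) : ∃ π : κ ≃ κ', ∀ k, τ (f (π k)) = σ (e k) := by
  obtain ⟨u, hu, -, hF₂⟩ := h
  obtain ⟨v, hv, -, hF₂'⟩ := h'
  exact IsSignFrame.exists_equiv (σ := σ ∘ e) (τ := τ ∘ f) (hu.comp e.injective)
    (hv.comp f.injective) (hF₂.symm.trans hF₂')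

theorem transverse_unique {σ τ : Fin 1 ⊕ Fin 2 → SignType}
    (h : HasAdaptedFrame F σ (.inl 0) (.inr : Fin 2 ↪ _))
    (h' : HasAdaptedFrame F τ (.inl 0) (.inr : Fin 2 ↪ _)) (hσ : Monotone (σ ∘ Sum.inr))
    (hτ : Monotone (τ ∘ Sum.inr)) : σ = τ := by
  have hline : σ (.inl 0) = τ (.inl 0) := h.sign_line_eq h'
  obtain ⟨π, hπ⟩ := h.exists_equiv h'
  have hπ' : (τ ∘ Sum.inr) ∘ π = σ ∘ Sum.inr := funext hπ
  have hplane : (τ ∘ Sum.inr) ∘ π = τ ∘ Sum.inr :=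
    Tuple.unique_monotone (τ := Equiv.refl _) (hπ'.symm ▸ hσ) hτ
  ext (i | j)
  · rw [Subsingleton.elim i 0, hline]
  · exact congrFun (hπ'.symm.trans hplane) j

theorem tangent_unique {σ τ : Fin 1 ⊕ Fin 1 → SignType}
    (h : HasAdaptedFrame F σ (.inl 0) (.refl _)) (h' : HasAdaptedFrame F τ (.inl 0) (.refl _)) :
    σ = τ := by
  have hline : σ (.inl 0) = τ (.inl 0) := h.sign_line_eq h'
  obtain ⟨π, hπ⟩ := h.exists_equiv h'
  have hsum : ∑ i, (σ i : ℤ) = ∑ i, (τ i : ℤ) := by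
    rw [← π.sum_comp fun i ↦ (τ i : ℤ)]
    exact Finset.sum_congr rfl fun i _ ↦ congrArg _ (hπ i).symm
  have hcompl : σ (.inr 0) = τ (.inr 0) :=
    strictMono_signType_cast.injective (α := SignType) (by simpa [hline] using hsum)
  ext (i | i) <;> rw [Subsingleton.elim i 0]
  exacts [hline, hcompl]

end Uniqueness

theorem exists_of_isRealizable [Fintype ι] [Fintype κ] (hσ : IsRealizable p q σ)
    (hκ : Fintype.card κ = 2) (hi₀ : i₀ ∈ Set.range e → σ i₀ = 0) :
    ∃ F : FlagPQ p q, HasAdaptedFrame F σ i₀ e := by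
  obtain ⟨u, hu⟩ := hσ.exists_isSignFrame
  let U := Submodule.span ℝ (Set.range (u ∘ e))
  have hline : Submodule.span ℝ {u i₀} ≤ (stdForm p q).orthogonal U := by
    refine span_le_orthogonal_span_iff.2 ?_
    rintro _ rfl _ ⟨k, rfl⟩
    by_cases hk : e k = i₀
    · simp [hk, hu.apply_self, hi₀ ⟨k, hk⟩]
    · exact hu.pairwise hk
  have hfinrank : finrank ℝ ((stdForm p q).orthogonal U) = p + q - 2 := by
    rw [LinearMap.BilinForm.finrank_orthogonal nondegenerate_stdForm, finrank_fin_fun,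
      finrank_span_eq_card (hu.linearIndependent.comp e e.injective), hκ]
  exact ⟨⟨(_, _), hline, finrank_span_singleton (hu.linearIndependent.ne_zero i₀), hfinrank⟩,
    u, hu, rfl, orthogonal_orthogonal_stdForm U⟩

theorem exists_transverse (F : FlagPQ p q) (hF : ¬ F.1.1 ≤ (stdForm p q).orthogonal F.1.2) :
    ∃ σ : Fin 1 ⊕ Fin 2 → SignType, Monotone (σ ∘ Sum.inr) ∧ HasAdaptedFrame F σ (.inl 0) .inr := by
  have hdisj : Disjoint F.1.1 ((stdForm p q).orthogonal F.1.2) :=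
    (Submodule.isAtom_iff_finrank_eq_one.2 F.2.2.1).not_le_iff_disjoint.1 hF
  obtain ⟨σ, hσ, u, hu, hline, hplane⟩ :=
    exists_isSignFrame_sum isSymm_stdForm F.2.2.1 (finrank_orthogonal_flag F) hdisj
      (F.2.1.trans (orthogonal_orthogonal_stdForm F.1.2).ge)
  rw [Set.range_unique] at hline
  exact ⟨σ, hσ, u, hu, hline.symm, hplane.symm⟩

theorem exists_tangent (F : FlagPQ p q) (hF : F.1.1 ≤ (stdForm p q).orthogonal F.1.2) :
    ∃ σ : Fin 1 ⊕ Fin 1 → SignType, σ (.inl 0) = 0 ∧ HasAdaptedFrame F σ (.inl 0) (.refl _) := by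
  obtain ⟨W, hdisj, hsup⟩ := IsModularLattice.exists_disjoint_and_sup_eq hF
  have hW : finrank ℝ W = 1 := by
    have hadd := Submodule.finrank_sup_add_finrank_inf_eq F.1.1 W
    rw [hsup, hdisj.eq_bot, finrank_orthogonal_flag, finrank_bot, F.2.2.1] at hadd
    lia
  have horth : F.1.1 ≤ (stdForm p q).orthogonal W :=
    F.2.1.trans ((orthogonal_orthogonal_stdForm F.1.2).ge.trans
      (LinearMap.BilinForm.orthogonal_le (le_sup_right.trans hsup.le)))
  obtain ⟨σ, -, u, hu, hline, hcompl⟩ :=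
    exists_isSignFrame_sum isSymm_stdForm F.2.2.1 hW hdisj horth
  have hplane : Submodule.span ℝ (Set.range u) = (stdForm p q).orthogonal F.1.2 := by
    rw [← hsup, ← hline, ← hcompl, ← Submodule.span_union, ← Set.Sum.elim_range,
      Sum.elim_comp_inl_inr]
  rw [Set.range_unique] at hline
  refine ⟨σ, ?_, u, hu, hline.symm, hplane.symm⟩
  have hmem : u (.inl 0) ∈ F.1.1 := hline ▸ Submodule.mem_span_singleton_self _
  have hzero : stdForm p q (u (.inl 0)) (u (.inl 0)) = 0 := hF hmem _ (F.2.1 hmem)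
  rw [hu.apply_self, ← SignType.coe_zero] at hzero
  exact strictMono_signType_cast.injective hzero

end HasAdaptedFrame

end Flags

section Classification

variable {p q : ℕ} {F G : FlagPQ p q}

/-- The possible shapes of a flag in `ℝ^{p,q}`: the signs of an adapted frame of size three, sorted
on the plane `V₂^⊥`, if `V₁ ⊄ V₂^⊥`, and the signs of an adapted frame of the plane `V₂^⊥` starting
with the isotropic line `V₁` if `V₁ ⊆ V₂^⊥`. -/
abbrev FlagType (p q : ℕ) : Type :=
  {σ : Fin 1 ⊕ Fin 2 → SignType // Monotone (σ ∘ Sum.inr) ∧ IsRealizable p q σ} ⊕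
    {σ : Fin 1 ⊕ Fin 1 → SignType // σ (.inl 0) = 0 ∧ IsRealizable p q σ}

/-- The flag `F` is adapted to a frame with the signs recorded by the given type. -/
def HasType (F : FlagPQ p q) : FlagType p q → Prop
  | .inl σ => HasAdaptedFrame F σ.1 (.inl 0) (.inr : Fin 2 ↪ _)
  | .inr σ => HasAdaptedFrame F σ.1 (.inl 0) (.refl _)

theorem exists_hasType (F : FlagPQ p q) : ∃ t, HasType F t := by
  by_cases hF : F.1.1 ≤ (stdForm p q).orthogonal F.1.2
  · obtain ⟨σ, hσ, h⟩ := HasAdaptedFrame.exists_tangent F hF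
    exact ⟨.inr ⟨σ, hσ, h.isRealizable⟩, h⟩
  · obtain ⟨σ, hσ, h⟩ := HasAdaptedFrame.exists_transverse F hF
    exact ⟨.inl ⟨σ, hσ, h.isRealizable⟩, h⟩

theorem exists_flag_hasType (t : FlagType p q) : ∃ F, HasType F t := by
  rcases t with ⟨σ, -, hσ⟩ | ⟨σ, hσ₀, hσ⟩
  · exact HasAdaptedFrame.exists_of_isRealizable hσ (by simp) (by simp)
  · exact HasAdaptedFrame.exists_of_isRealizable hσ (by simp) fun _ ↦ hσ₀

namespace HasType

variable {t t' : FlagType p q}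

theorem of_orbitRel (hG : HasType G t) (h : orbitRel p q F G) : HasType F t := by
  cases t with
  | inl σ => exact HasAdaptedFrame.of_orbitRel hG h
  | inr σ => exact HasAdaptedFrame.of_orbitRel hG h

theorem orbitRel (hF : HasType F t) (hG : HasType G t) : orbitRel p q F G := by
  cases t with
  | inl σ => exact HasAdaptedFrame.orbitRel hF hG
  | inr σ => exact HasAdaptedFrame.orbitRel hF hG

theorem unique (h : HasType F t) (h' : HasType F t') : t = t' := by
  obtain ⟨σ, hσ⟩ | σ := t <;> obtain ⟨τ, hτ⟩ | τ := t'
  · exact congrArg Sum.inl (Subtype.ext (HasAdaptedFrame.transverse_unique h h' hσ.1 hτ.1))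
  · have hmem := (HasAdaptedFrame.le_orthogonal_iff h).1
      ((HasAdaptedFrame.le_orthogonal_iff h').2 ⟨_, rfl⟩)
    simp at hmem
  · have hmem := (HasAdaptedFrame.le_orthogonal_iff h').1
      ((HasAdaptedFrame.le_orthogonal_iff h).2 ⟨_, rfl⟩)
    simp at hmem
  · exact congrArg Sum.inr (Subtype.ext (HasAdaptedFrame.tangent_unique h h'))

end HasType

theorem natCard_quot_orbitRel (p q : ℕ) :
    Nat.card (Quot (orbitRel p q)) = Nat.card (FlagType p q) := by
  choose t ht using exists_hasType (p := p) (q := q)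
  let T : Quot (orbitRel p q) → FlagType p q :=
    Quot.lift t fun F G h ↦ (ht F).unique ((ht G).of_orbitRel h)
  refine Nat.card_eq_of_bijective T ⟨?_, fun s ↦ ?_⟩
  · rintro ⟨F⟩ ⟨G⟩ hFG
    have ht_eq : t F = t G := hFG
    exact Quot.sound ((ht F).orbitRel (ht_eq ▸ ht G))
  · obtain ⟨F, hF⟩ := exists_flag_hasType s
    exact ⟨Quot.mk _ F, (ht F).unique hF⟩

theorem natCard_flagType_min (p q : ℕ) :
    Nat.card (FlagType (min p 3) (min q 3)) = Nat.card (FlagType p q) := by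
  refine Nat.card_congr (Equiv.sumCongr ?_ ?_) <;>
    refine Equiv.subtypeEquivRight fun σ ↦ and_congr_right fun _ ↦ ?_
  · exact isRealizable_min_iff (by simp)
  · exact isRealizable_min_iff (by simp)

theorem orbit_count_of_q_eq_two_general (p q : ℕ) :
    Nat.card (Quot (orbitRel p q)) = Fintype.card (FlagType (min p 3) (min q 3)) := by
  rw [natCard_quot_orbitRel, ← natCard_flagType_min, Nat.card_eq_fintype_card]

end Classification

/-- If `p ≥ 3` and `q = 2`, the action of `O(p,q)` on the flag manifold `F_{1, p+q-2}`
has exactly 15 orbits. -/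
theorem orbit_count_of_q_eq_two (p : ℕ) (hp : 3 ≤ p) :
    Nat.card (Quot (orbitRel p 2)) = 15 := by
  rw [orbit_count_of_q_eq_two_general, min_eq_right hp]
  decide +kernel
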